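/- For every τ in the upper half-plane and every z ∈ ℂ, (1/2) e^{−πiz/2 − πi/4 + πiτ/16} [ ϑ(z/2 − τ/8 − 1/4 ; τ/4) + i·ϑ(z/2 − τ/8 + 1/4 ; τ/4) ] = ϑ(z;τ). -/

import Mathlib

/-!
Completing the square turns `ϑ(w;σ)` into an exponential factor times Mathlib's
`jacobiTheta₂ (w + 1/2 + σ/2) σ`, a sum over all integers (`thetaF_eq_jacobiTheta₂`). For the two
theta functions on the left-hand side, the shift by `-τ/8` makes these factors cancel the given
prefactor up to the phases `1` and `I`. Since `I * I = -1`, the left-hand side becomes half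
the difference of
`∑ m, exp (πiτm²/4 + πi(z + 1/2)m)` and `∑ m, (-1)^m exp (πiτm²/4 + πi(z + 1/2)m)`. Only the odd
`m = 2n + 1` survive, and these terms are exactly those of `ϑ(z;τ)`.
-/

open Complex Real Filter Topology

/-- The Jacobi theta function `ϑ(z;τ) = Σ_{n ∈ ℤ+1/2} q^{n²/2} e^{2πin(z+1/2)}`. -/
noncomputable def thetaF (z τ : ℂ) : ℂ :=
  ∑' n : ℤ, Complex.exp (2 * ↑π * I * τ * ((n : ℂ) + 1/2) ^ 2 / 2 +
    2 * ↑π * I * ((n : ℂ) + 1/2) * (z + 1/2))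

/-- Expanding `(n + 1/2)²` expresses `ϑ` through Mathlib's two-variable theta function. No condition
on `σ` is needed, as the two series agree term by term up to a constant factor. -/
lemma thetaF_eq_jacobiTheta₂ (w σ : ℂ) :
    thetaF w σ = Complex.exp (↑π * I * σ / 4 + ↑π * I * (w + 1 / 2)) *
      jacobiTheta₂ (w + 1 / 2 + σ / 2) σ := by
  unfold thetaF jacobiTheta₂ jacobiTheta₂_term
  rw [← tsum_mul_left]
  refine tsum_congr fun n => ?_
  rw [← Complex.exp_add]
  ring_nf

/-- A shift of the elliptic variable by a half period introduces the sign `(-1) ^ m`. -/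
lemma jacobiTheta₂_term_add_half (m : ℤ) (w σ : ℂ) :
    jacobiTheta₂_term m (w + 1 / 2) σ = (-1) ^ m * jacobiTheta₂_term m w σ := by
  unfold jacobiTheta₂_term
  rw [← Complex.exp_pi_mul_I, ← Complex.exp_int_mul, ← Complex.exp_add]
  ring_nf

/-- The odd-index part of a theta series with parameter `τ/4` is `ϑ(z;τ)`. -/
lemma jacobiTheta₂_sub_eq_thetaF (τ : ℂ) (hτ : 0 < τ.im) (z : ℂ) :
    1 / 2 * (jacobiTheta₂ (z / 2 + 1 / 4) (τ / 4) -
      jacobiTheta₂ (z / 2 + 1 / 4 + 1 / 2) (τ / 4)) = thetaF z τ := by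
  have hτ' : 0 < (τ / 4).im := by
    have h : (τ / 4).im = τ.im / 4 := by simp
    rw [h]; positivity
  have hs (w : ℂ) := (summable_jacobiTheta₂_term_iff w (τ / 4)).2 hτ'
  unfold jacobiTheta₂
  rw [← (hs _).tsum_sub (hs _), ← tsum_mul_left]
  have hinj : Function.Injective (fun n : ℤ => 2 * n + 1) := fun a b h => by
    simp only at h; omega
  rw [← hinj.tsum_eq]
  · unfold thetaF
    refine tsum_congr fun n => ?_
    have hodd : (-1 : ℂ) ^ (2 * n + 1) = -1 := (odd_two_mul_add_one n).neg_one_zpow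
    rw [jacobiTheta₂_term_add_half, hodd]
    unfold jacobiTheta₂_term
    push_cast
    ring_nf
  · intro m hm
    rcases Int.even_or_odd m with he | ⟨k, hk⟩
    · refine absurd ?_ hm
      beta_reduce
      rw [jacobiTheta₂_term_add_half, he.neg_one_zpow]
      ring
    · exact ⟨k, hk.symm⟩

/-- The theta identity used in the proof of Corollary 8.2 of the paper. -/
theorem stmt16 (τ : ℂ) (hτ : 0 < τ.im) (z : ℂ) :
    1 / 2 * Complex.exp (-(↑π * I * z) / 2 - ↑π * I / 4 + ↑π * I * τ / 16) *
        (thetaF (z / 2 - τ / 8 - 1 / 4) (τ / 4) + I * thetaF (z / 2 - τ / 8 + 1 / 4) (τ / 4)) =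
      thetaF z τ := by
  have h1 : Complex.exp (-(↑π * I * z) / 2 - ↑π * I / 4 + ↑π * I * τ / 16) *
      thetaF (z / 2 - τ / 8 - 1 / 4) (τ / 4) = jacobiTheta₂ (z / 2 + 1 / 4) (τ / 4) := by
    rw [thetaF_eq_jacobiTheta₂, ← mul_assoc, ← Complex.exp_add]
    ring_nf
    rw [Complex.exp_zero, one_mul]
  -- The remaining phase is `exp (πi/2) = I`, which combines with the coefficient `I` to give `-1`.
  have h2 : Complex.exp (-(↑π * I * z) / 2 - ↑π * I / 4 + ↑π * I * τ / 16) *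
      thetaF (z / 2 - τ / 8 + 1 / 4) (τ / 4) =
        I * jacobiTheta₂ (z / 2 + 1 / 4 + 1 / 2) (τ / 4) := by
    rw [thetaF_eq_jacobiTheta₂, ← mul_assoc, ← Complex.exp_add]
    conv_rhs => rw [← Complex.exp_pi_div_two_mul_I]
    ring_nf
  rw [← jacobiTheta₂_sub_eq_thetaF τ hτ z]
  linear_combination 1 / 2 * h1 + I / 2 * h2 +
    1 / 2 * jacobiTheta₂ (z / 2 + 1 / 4 + 1 / 2) (τ / 4) * Complex.I_mul_I
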